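/- There exists an absolute constant c > 0 such that for every n ≥ m_0 and every x ∈ Ω_n, the Nörlund logarithmic kernel satisfies |F_{p_n}(x)| ≥ c/x. -/

import Mathlib

open MeasureTheory Filter

noncomputable section

/-- The unit cube `[0,1)^d`. -/
def unitCube (d : ℕ) : Set (Fin d → ℝ) := Set.univ.pi fun _ => Set.Ico (0:ℝ) 1

/-- Lebesgue measure restricted to the unit cube `[0,1)^d`. -/
def cubeMeasure (d : ℕ) : Measure (Fin d → ℝ) := volume.restrict (unitCube d)

/-- The `1`-periodic function equal to `1` on `[0,1/2)` and to `-1` on `[1/2,1)`. -/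
def r0 (x : ℝ) : ℝ := if Int.fract x < 1/2 then 1 else -1

/-- The Rademacher functions. -/
def rademacher (n : ℕ) (x : ℝ) : ℝ := r0 (2 ^ n * x)

/-- The Walsh functions (in Paley enumeration, via binary digits). -/
def walsh (n : ℕ) (x : ℝ) : ℝ :=
  ∏ k ∈ Finset.range (n + 1), if n.testBit k then rademacher k x else 1

/-- The Walsh–Dirichlet kernel `D_n`. -/
def dirichletKernel (n : ℕ) (x : ℝ) : ℝ := ∑ k ∈ Finset.range n, walsh k x

/-- `l_n = ∑_{k=1}^{n-1} 1/k`. -/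
def logSum (n : ℕ) : ℝ := ∑ k ∈ Finset.Icc 1 (n - 1), (1 : ℝ) / k

/-- The Nörlund logarithmic kernel `F_n`. -/
def FKernel (n : ℕ) (u : ℝ) : ℝ :=
  (1 / logSum n) * ∑ i ∈ Finset.Ico 1 n, dirichletKernel (n - i) u / i

/-- The Riesz logarithmic kernel `G_n`. -/
def GKernel (n : ℕ) (u : ℝ) : ℝ :=
  (1 / logSum n) * ∑ i ∈ Finset.Ico 1 n, dirichletKernel i u / i

/-- Walsh–Fourier coefficient of `f` on the unit cube. -/
def walshCoef {d : ℕ} (f : (Fin d → ℝ) → ℝ) (j : Fin d → ℕ) : ℝ :=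
  ∫ x, f x * ∏ i, walsh (j i) (x i) ∂(cubeMeasure d)

/-- Rectangular partial sums of the multiple Walsh–Fourier series. -/
def rectPartialSum {d : ℕ} (f : (Fin d → ℝ) → ℝ) (N : Fin d → ℕ) (x : Fin d → ℝ) : ℝ :=
  ∑ j ∈ Fintype.piFinset (fun i => Finset.range (N i)),
    walshCoef f j * ∏ i, walsh (j i) (x i)

/-- The mixed logarithmic means `(L_{n_B} ∘ R_{n_{B'}})(f)`. -/
def mixedLogMean {d : ℕ} (B : Finset (Fin d)) (f : (Fin d → ℝ) → ℝ)
    (n : Fin d → ℕ) (x : Fin d → ℝ) : ℝ :=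
  (∏ j, logSum (n j))⁻¹ *
    ∑ i ∈ Fintype.piFinset (fun j => Finset.Ico 1 (n j)),
      rectPartialSum f (fun j => if j ∈ B then n j - i j else i j) x / ∏ j, (i j : ℝ)

/-- A Young function: convex, continuous, even, vanishing at `0`, with
`Q(u)/u → ∞` at `+∞` and `Q(u)/u → 0` at `0`. -/
structure YoungFunction where
  toFun : ℝ → ℝ
  nonneg : ∀ u, 0 ≤ toFun u
  convexOn : ConvexOn ℝ Set.univ toFun
  continuous : Continuous toFun
  even : ∀ u, toFun (-u) = toFun u
  map_zero : toFun 0 = 0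
  tendsto_atTop : Tendsto (fun u => toFun u / u) atTop atTop
  tendsto_zero : Tendsto (fun u => toFun u / u) (nhdsWithin 0 {(0:ℝ)}ᶜ) (nhds 0)

/-- The set of admissible constants `k` in the Luxemburg norm of `f`. -/
def orliczSet {d : ℕ} (Q : YoungFunction) (f : (Fin d → ℝ) → ℝ) : Set ℝ :=
  {k | 0 < k ∧ Integrable (fun x => Q.toFun (|f x| / k)) (cubeMeasure d) ∧
    ∫ x, Q.toFun (|f x| / k) ∂(cubeMeasure d) ≤ 1}

/-- `f` belongs to the Orlicz space `L_Q(I^d)`. -/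
def MemOrlicz {d : ℕ} (Q : YoungFunction) (f : (Fin d → ℝ) → ℝ) : Prop :=
  Measurable f ∧ (orliczSet Q f).Nonempty

/-- The Luxemburg norm on the Orlicz space `L_Q(I^d)`. -/
def orliczNorm {d : ℕ} (Q : YoungFunction) (f : (Fin d → ℝ) → ℝ) : ℝ :=
  sInf (orliczSet Q f)

/-- `p_n = 2^{2n} + 2^{2n-2} + ⋯ + 2^0`. -/
def pIdx (n : ℕ) : ℕ := ∑ k ∈ Finset.range (n + 1), 4 ^ k

/-- `m̃ = ⌊ l_{p_{⌊m/2⌋}-1}/16 - 2^15 ⌋`. -/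
def mTilde (m : ℕ) : ℤ := ⌊logSum (pIdx (m / 2) - 1) / 16 - 2 ^ 15⌋

/-- `m₀ = min{m : m̃ > 1}`. -/
def m₀ : ℕ := sInf {m : ℕ | 1 < mTilde m}

/-- The set `Ω_n`. -/
def Omega (n : ℕ) : Set ℝ :=
  ⋃ m ∈ Finset.Icc n (2 * n),
    Set.Ico ((2:ℝ) ^ (-(m:ℤ) - 1) + (2:ℝ) ^ (-(m:ℤ) - mTilde m)) ((2:ℝ) ^ (-(m:ℤ)))

/-- `k`-th binary digit of `x` (the expansion not terminating in `1`'s). -/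
def binDigit (k : ℕ) (x : ℝ) : ℕ := (⌊x * 2 ^ (k + 1)⌋).toNat % 2

/-- Dyadic addition on `[0,1)`. -/
def dyadicAdd (x t : ℝ) : ℝ :=
  ∑' k : ℕ, |(binDigit k x : ℝ) - (binDigit k t : ℝ)| / 2 ^ (k + 1)

/-- Dyadic convolution `f ∗ K` on `[0,1)`. -/
def dyadicConv (f K : ℝ → ℝ) (x : ℝ) : ℝ :=
  ∫ t in Set.Ico (0:ℝ) 1, f t * K (dyadicAdd x t)

/-- Lebesgue measure restricted to `[0,1)`. -/
def unitMeasure : Measure ℝ := volume.restrict (Set.Ico (0:ℝ) 1)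

/-- A set `A ⊆ L_Q(I^d)` is nowhere dense w.r.t. the Luxemburg norm. -/
def OrliczNowhereDense {d : ℕ} (Q : YoungFunction) (A : Set ((Fin d → ℝ) → ℝ)) : Prop :=
  ∀ f, MemOrlicz Q f → ∀ ε > 0, ∃ g, MemOrlicz Q g ∧ ∃ δ > 0,
    (∀ h, MemOrlicz Q h → orliczNorm Q (h - g) < δ → orliczNorm Q (h - f) < ε) ∧
    (∀ h, MemOrlicz Q h → orliczNorm Q (h - g) < δ → h ∉ A)

/-- A set `A ⊆ L_Q(I^d)` is of first Baire category (meager) w.r.t. the Luxemburg norm. -/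
def OrliczMeager {d : ℕ} (Q : YoungFunction) (A : Set ((Fin d → ℝ) → ℝ)) : Prop :=
  ∃ F : ℕ → Set ((Fin d → ℝ) → ℝ), (∀ k, OrliczNowhereDense Q (F k)) ∧ A ⊆ ⋃ k, F k

/-!
If `2 ^ m * x ∈ [1/2, 1)`, then `j ↦ |D_j(x)|` is periodic with period `2 ^ (m + 1)`: on each
period it is the tent rising from `0` to `2 ^ m` and falling back to `0`, of mean `2 ^ m / 2`. Write
`l_N F_N(x) = ∑ j < N, D_j(x) / (N - j)` with `N = 2 ^ (m + 1) * Q + R`. The complete periods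
contribute at most about `(2 ^ m / 2) * H_Q`. Since `j ↦ D_j(x)` is `1`-Lipschitz, the last `R`
terms contribute about `|D_N(x)| * H_R`. For `N = p_n` and `m ≤ 2 * n`, the alternating binary
digits of `p_n` give `|D_N(x)| ≈ (2 / 3) * 2 ^ m` and `H_R ≈ m * log 2`, while `H_Q ≲ m * log 2` if
`n ≤ m`. As `2 / 3 > 1 / 2`, the last terms win by a fixed multiple of `2 ^ m * m`, which is the
order of `l_{p_n} / x`.
-/

section HarmonicNumbers

lemma harmonic_mono : Monotone harmonic :=
  monotone_nat_of_le_succ fun n => by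
    rw [harmonic_succ]
    exact le_add_of_nonneg_right (by positivity)

lemma harmonic_eq_sum_range_real (n : ℕ) :
    (harmonic n : ℝ) = ∑ i ∈ Finset.range n, ((i : ℝ) + 1)⁻¹ := by
  simp [harmonic]

lemma sum_range_succ_inv_mul_add_le {c r : ℝ} (hc : 0 < c) (hr : 0 < r) (n : ℕ) :
    ∑ k ∈ Finset.range (n + 1), (c * k + r)⁻¹ ≤ r⁻¹ + harmonic n / c := by
  induction n with
  | zero => simp
  | succ n ih =>
    have hterm : (c * (n + 1 : ℕ) + r)⁻¹ ≤ ((n + 1 : ℕ) : ℝ)⁻¹ / c := by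
      rw [div_eq_mul_inv, ← mul_inv, mul_comm _ c]
      gcongr
      linarith
    rw [Finset.sum_range_succ, harmonic_succ, Rat.cast_add, add_div]
    push_cast at hterm ih ⊢
    linarith

lemma logSum_eq_harmonic (n : ℕ) : logSum n = harmonic (n - 1) := by
  simp [logSum, harmonic_eq_sum_Icc]

lemma logSum_mono : Monotone logSum := fun a b h => by
  rw [logSum_eq_harmonic, logSum_eq_harmonic]
  exact_mod_cast harmonic_mono (Nat.sub_le_sub_right h 1)

end HarmonicNumbers

section Walsh

variable {m k : ℕ} {x : ℝ}

lemma abs_rademacher (k : ℕ) (x : ℝ) : |rademacher k x| = 1 := by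
  unfold rademacher r0
  split_ifs <;> simp

lemma rademacher_eq_one (hx₀ : 0 ≤ 2 ^ k * x) (hx₁ : 2 ^ k * x < 1 / 2) : rademacher k x = 1 := by
  rw [rademacher, r0, Int.fract_eq_self.2 ⟨hx₀, by linarith⟩, if_pos hx₁]

lemma rademacher_eq_neg_one (hx : 2 ^ k * x ∈ Set.Ico (1 / 2) 1) : rademacher k x = -1 := by
  rw [rademacher, r0, Int.fract_eq_self.2 ⟨by linarith [hx.1], hx.2⟩, if_neg hx.1.not_gt]

lemma walsh_eq_prod_range {n M : ℕ} (x : ℝ) (h : n < 2 ^ M) :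
    walsh n x = ∏ k ∈ Finset.range M, if n.testBit k then rademacher k x else 1 := by
  have extend {a b : ℕ} (hab : a ≤ b) (hn : n < 2 ^ a) :
      (∏ k ∈ Finset.range a, if n.testBit k then rademacher k x else 1) =
        ∏ k ∈ Finset.range b, if n.testBit k then rademacher k x else 1 := by
    refine Finset.prod_subset (Finset.range_mono hab) fun k _ hk => ?_
    have hak : a ≤ k := by simpa using hk
    simp [Nat.testBit_lt_two_pow (hn.trans_le (Nat.pow_le_pow_right two_pos hak))]
  rcases le_total (n + 1) M with hnM | hnM
  · exact extend hnM ((Nat.lt_succ_self n).trans Nat.lt_two_pow_self)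
  · exact (extend hnM h).symm

lemma abs_walsh (n : ℕ) (x : ℝ) : |walsh n x| = 1 := by
  rw [walsh, Finset.abs_prod]
  refine Finset.prod_eq_one fun k _ => ?_
  split_ifs
  · exact abs_rademacher k x
  · exact abs_one

lemma walsh_two_pow (m : ℕ) (x : ℝ) : walsh (2 ^ m) x = rademacher m x := by
  rw [walsh_eq_prod_range (M := m + 1) x (Nat.pow_lt_pow_succ one_lt_two)]
  simp [Nat.testBit_two_pow]

lemma walsh_two_pow_mul_add {e s : ℕ} (hs : s < 2 ^ e) (q : ℕ) (x : ℝ) :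
    walsh (2 ^ e * q + s) x = walsh (2 ^ e * q) x * walsh s x := by
  have hlt : 2 ^ e * q + s < 2 ^ (2 ^ e * q + s) := Nat.lt_two_pow_self
  rw [walsh_eq_prod_range x hlt, walsh_eq_prod_range x ((Nat.le_add_right _ s).trans_lt hlt),
    walsh_eq_prod_range x ((Nat.le_add_left s _).trans_lt hlt), ← Finset.prod_mul_distrib]
  refine Finset.prod_congr rfl fun k _ => ?_
  rw [Nat.testBit_two_pow_mul_add q hs, Nat.testBit_two_pow_mul]
  by_cases hk : k < e
  · simp [hk, hk.not_ge]
  · have : s.testBit k = false :=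
      Nat.testBit_lt_two_pow (hs.trans_le (Nat.pow_le_pow_right two_pos (not_lt.1 hk)))
    simp [hk, this, not_lt.1 hk]

lemma pos_of_two_pow_mul_mem_Ico (hx : 2 ^ m * x ∈ Set.Ico (1 / 2) 1) : 0 < x :=
  pos_of_mul_pos_right (one_half_pos.trans_le hx.1) (by positivity)

lemma walsh_eq_one {s : ℕ} (hx₀ : 0 ≤ x) (hx₁ : 2 ^ m * x < 1) (hs : s < 2 ^ m) :
    walsh s x = 1 := by
  rw [walsh_eq_prod_range x hs]
  refine Finset.prod_eq_one fun k hk => ?_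
  have hkx : 2 ^ (k + 1) * x < 1 := by
    refine lt_of_le_of_lt ?_ hx₁
    gcongr
    · norm_num
    · exact Finset.mem_range.1 hk
  rw [rademacher_eq_one (by positivity) (by rw [pow_succ] at hkx; linarith), ite_self]

lemma walsh_two_pow_add_eq_neg_one {s : ℕ} (hx : 2 ^ m * x ∈ Set.Ico (1 / 2) 1) (hs : s < 2 ^ m) :
    walsh (2 ^ m + s) x = -1 := by
  have hsplit := walsh_two_pow_mul_add hs 1 x
  rwa [mul_one, walsh_two_pow, rademacher_eq_neg_one hx,
    walsh_eq_one (pos_of_two_pow_mul_mem_Ico hx).le hx.2 hs, mul_one] at hsplit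

end Walsh

section Tent

/-- The tent on `[0, 2 * A]`, with slopes `1` and `-1` and apex `A` at the midpoint. It is the
modulus of the Walsh–Dirichlet kernel, as a function of its index, over one period; outside
`[0, 2 * A]` it is negative. -/
def tent (A t : ℝ) : ℝ := min t (2 * A - t)

lemma tent_eq_left {A t : ℝ} (h : t ≤ A) : tent A t = t := min_eq_left (by linarith)

lemma tent_eq_right {A t : ℝ} (h : A ≤ t) : tent A t = 2 * A - t := min_eq_right (by linarith)

lemma tent_nonneg {A t : ℝ} (ht₀ : 0 ≤ t) (ht : t ≤ 2 * A) : 0 ≤ tent A t :=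
  le_min ht₀ (by linarith)

lemma sum_tent (a : ℕ) : ∑ s ∈ Finset.range (2 * a), tent a s = (a : ℝ) ^ 2 := by
  have hpair : ∀ s ∈ Finset.range a, tent a s + tent a (a + s : ℕ) = a := fun s hs => by
    have hsa : (s : ℝ) ≤ a := by exact_mod_cast (Finset.mem_range.1 hs).le
    rw [tent_eq_left hsa, tent_eq_right (by simp)]
    push_cast
    ring
  rw [two_mul, Finset.sum_range_add, ← Finset.sum_add_distrib, Finset.sum_congr rfl hpair]
  simp [sq]

end Tent

section DirichletKernel

variable {m : ℕ} {x : ℝ}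

lemma dirichletKernel_two_pow_mul_add {e s : ℕ} (hs : s ≤ 2 ^ e) (q : ℕ) (x : ℝ) :
    dirichletKernel (2 ^ e * q + s) x =
      dirichletKernel (2 ^ e * q) x + walsh (2 ^ e * q) x * dirichletKernel s x := by
  rw [dirichletKernel, Finset.sum_range_add, dirichletKernel, dirichletKernel, Finset.mul_sum]
  congr 1
  exact Finset.sum_congr rfl fun t ht =>
    walsh_two_pow_mul_add ((Finset.mem_range.1 ht).trans_le hs) q x

lemma abs_dirichletKernel_add_sub_le (n k : ℕ) (x : ℝ) :
    |dirichletKernel (n + k) x - dirichletKernel n x| ≤ k := by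
  rw [dirichletKernel, Finset.sum_range_add, dirichletKernel, add_sub_cancel_left]
  refine (Finset.abs_sum_le_sum_abs _ _).trans_eq ?_
  simp [abs_walsh]

lemma dirichletKernel_eq_tent (hx : 2 ^ m * x ∈ Set.Ico (1 / 2) 1) {s : ℕ}
    (hs : s ≤ 2 ^ (m + 1)) : dirichletKernel s x = tent (2 ^ m) s := by
  induction s with
  | zero => simp [dirichletKernel, tent]
  | succ s ih =>
    rw [dirichletKernel, Finset.sum_range_succ, ← dirichletKernel, ih (by omega)]
    rcases lt_or_ge s (2 ^ m) with hsm | hsm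
    · have hsm' : ((s + 1 : ℕ) : ℝ) ≤ 2 ^ m := by exact_mod_cast hsm
      rw [walsh_eq_one (pos_of_two_pow_mul_mem_Ico hx).le hx.2 hsm, tent_eq_left hsm',
        tent_eq_left ((Nat.cast_le.2 s.le_succ).trans hsm'), Nat.cast_succ]
    · obtain ⟨t, rfl⟩ := Nat.exists_eq_add_of_le hsm
      have hsm' : (2 : ℝ) ^ m ≤ (2 ^ m + t : ℕ) := by exact_mod_cast hsm
      rw [walsh_two_pow_add_eq_neg_one hx (by rw [pow_succ] at hs; omega), tent_eq_right hsm',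
        tent_eq_right (hsm'.trans (Nat.cast_le.2 (Nat.le_succ _)))]
      push_cast
      ring

lemma dirichletKernel_two_pow_succ_mul (hx : 2 ^ m * x ∈ Set.Ico (1 / 2) 1) (q : ℕ) :
    dirichletKernel (2 ^ (m + 1) * q) x = 0 := by
  induction q with
  | zero => simp [dirichletKernel]
  | succ q ih =>
    have hend : tent (2 ^ m) (2 ^ (m + 1) : ℕ) = 0 := by
      push_cast
      rw [tent_eq_right (by gcongr <;> norm_num), pow_succ]
      ring
    rw [Nat.mul_succ, dirichletKernel_two_pow_mul_add le_rfl, ih,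
      dirichletKernel_eq_tent hx le_rfl, hend, mul_zero, add_zero]

lemma abs_dirichletKernel_eq_tent (hx : 2 ^ m * x ∈ Set.Ico (1 / 2) 1) (q : ℕ) {s : ℕ}
    (hs : s ≤ 2 ^ (m + 1)) :
    |dirichletKernel (2 ^ (m + 1) * q + s) x| = tent (2 ^ m) s := by
  have hs' : (s : ℝ) ≤ 2 * 2 ^ m := by rw [← pow_succ']; exact_mod_cast hs
  rw [dirichletKernel_two_pow_mul_add hs, dirichletKernel_two_pow_succ_mul hx, zero_add, abs_mul,
    abs_walsh, one_mul, dirichletKernel_eq_tent hx hs,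
    abs_of_nonneg (tent_nonneg s.cast_nonneg hs')]

end DirichletKernel

section NorlundSum

variable {m : ℕ} {x : ℝ}

lemma sum_Ico_dirichletKernel_div_eq (N : ℕ) (x : ℝ) :
    ∑ i ∈ Finset.Ico 1 N, dirichletKernel (N - i) x / i =
      ∑ j ∈ Finset.range N, dirichletKernel j x / ((N : ℝ) - j) := by
  rcases N.eq_zero_or_pos with rfl | hN
  · simp
  have hreflect := Finset.sum_Ico_reflect (fun j => dirichletKernel j x / ((N : ℝ) - j)) 1
    (Nat.le_succ N)
  rw [Nat.add_sub_cancel_left, Nat.add_sub_cancel] at hreflect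
  rw [Finset.range_eq_Ico, Finset.sum_eq_sum_Ico_succ_bot hN, zero_add, ← hreflect]
  simp only [dirichletKernel, Finset.range_zero, Finset.sum_empty, zero_div, zero_add]
  refine Finset.sum_congr rfl fun i hi => ?_
  rw [Nat.cast_sub (Finset.mem_Ico.1 hi).2.le, sub_sub_cancel]

lemma sum_range_mul {M : Type*} [AddCommMonoid M] (f : ℕ → M) (b n : ℕ) :
    ∑ j ∈ Finset.range (b * n), f j =
      ∑ q ∈ Finset.range n, ∑ s ∈ Finset.range b, f (b * q + s) := by
  induction n with
  | zero => simp
  | succ n ih => rw [Nat.mul_succ, Finset.sum_range_add, ih, Finset.sum_range_succ]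

lemma abs_sum_dirichletKernel_period_le (hx : 2 ^ m * x ∈ Set.Ico (1 / 2) 1) (q : ℕ) {t : ℝ}
    (ht : 2 ^ (m + 1) * (q + 1) < t) :
    |∑ s ∈ Finset.range (2 ^ (m + 1)), dirichletKernel (2 ^ (m + 1) * q + s) x /
        (t - (2 ^ (m + 1) * q + s : ℕ))| ≤ (2 ^ m) ^ 2 / (t - 2 ^ (m + 1) * (q + 1)) := by
  have htent := sum_tent (2 ^ m)
  rw [← pow_succ'] at htent
  push_cast at htent
  rw [← htent, Finset.sum_div]
  refine (Finset.abs_sum_le_sum_abs _ _).trans (Finset.sum_le_sum fun s hs => ?_)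
  have hs' : (s : ℝ) ≤ 2 ^ (m + 1) := by exact_mod_cast (Finset.mem_range.1 hs).le
  have hden : t - 2 ^ (m + 1) * (q + 1) ≤ t - (2 ^ (m + 1) * q + s : ℕ) := by
    push_cast
    linarith
  have hpos : 0 < t - 2 ^ (m + 1) * (q + 1) := sub_pos.2 ht
  rw [abs_div, abs_dirichletKernel_eq_tent hx q (Finset.mem_range.1 hs).le,
    abs_of_pos (hpos.trans_le hden)]
  have := tent_nonneg s.cast_nonneg (hs'.trans_eq (pow_succ' 2 m))
  gcongr

lemma abs_sum_dirichletKernel_periods_le (hx : 2 ^ m * x ∈ Set.Ico (1 / 2) 1) (Q : ℕ) {r : ℝ}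
    (hr : 0 < r) :
    |∑ j ∈ Finset.range (2 ^ (m + 1) * Q), dirichletKernel j x / (2 ^ (m + 1) * Q + r - j)| ≤
      (2 ^ m) ^ 2 / r + 2 ^ m / 2 * harmonic Q := by
  have hperiod : ∀ q ∈ Finset.range Q,
      |∑ s ∈ Finset.range (2 ^ (m + 1)), dirichletKernel (2 ^ (m + 1) * q + s) x /
          (2 ^ (m + 1) * Q + r - (2 ^ (m + 1) * q + s : ℕ))| ≤
        (2 ^ m) ^ 2 * (2 ^ (m + 1) * ((Q - 1 - q : ℕ) : ℝ) + r)⁻¹ := fun q hq => by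
    have hqQ : q + 1 ≤ Q := Finset.mem_range.1 hq
    have hqQ' : (q : ℝ) + 1 ≤ Q := by exact_mod_cast hqQ
    refine (abs_sum_dirichletKernel_period_le hx q ?_).trans_eq ?_
    · calc (2 : ℝ) ^ (m + 1) * (q + 1) ≤ 2 ^ (m + 1) * Q := by gcongr
        _ < 2 ^ (m + 1) * Q + r := lt_add_of_pos_right _ hr
    · rw [Nat.sub_sub, add_comm 1 q, Nat.cast_sub hqQ, div_eq_mul_inv]
      push_cast
      ring
  rw [sum_range_mul]
  calc _ ≤ ∑ q ∈ Finset.range Q, (2 ^ m) ^ 2 * (2 ^ (m + 1) * ((Q - 1 - q : ℕ) : ℝ) + r)⁻¹ :=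
        (Finset.abs_sum_le_sum_abs _ _).trans (Finset.sum_le_sum hperiod)
    _ = (2 ^ m) ^ 2 * ∑ k ∈ Finset.range Q, ((2 : ℝ) ^ (m + 1) * k + r)⁻¹ := by
        rw [← Finset.mul_sum,
          Finset.sum_range_reflect fun k : ℕ => ((2 : ℝ) ^ (m + 1) * k + r)⁻¹]
    _ ≤ (2 ^ m) ^ 2 * ∑ k ∈ Finset.range (Q + 1), ((2 : ℝ) ^ (m + 1) * k + r)⁻¹ := by
        gcongr
        exact Nat.le_succ Q
    _ ≤ (2 ^ m) ^ 2 * (r⁻¹ + harmonic Q / 2 ^ (m + 1)) := by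
        gcongr
        exact sum_range_succ_inv_mul_add_le (by positivity) hr Q
    _ = (2 ^ m) ^ 2 / r + 2 ^ m / 2 * harmonic Q := by
        rw [pow_succ]
        field

lemma le_abs_sum_dirichletKernel_tail (M R : ℕ) (x : ℝ) :
    |dirichletKernel (M + R) x| * harmonic R - R ≤
      |∑ s ∈ Finset.range R, dirichletKernel (M + s) x / ((R : ℝ) - s)| := by
  have hharm : (harmonic R : ℝ) = ∑ s ∈ Finset.range R, ((R : ℝ) - s)⁻¹ := by
    rw [harmonic_eq_sum_range_real, ← Finset.sum_range_reflect]
    refine Finset.sum_congr rfl fun s hs => ?_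
    have hsR : s + 1 ≤ R := Finset.mem_range.1 hs
    rw [Nat.sub_sub, add_comm 1 s, Nat.cast_sub hsR]
    push_cast
    ring
  have hdiff : |dirichletKernel (M + R) x * harmonic R -
      ∑ s ∈ Finset.range R, dirichletKernel (M + s) x / ((R : ℝ) - s)| ≤ R := by
    rw [hharm, Finset.mul_sum, ← Finset.sum_sub_distrib]
    refine (Finset.abs_sum_le_sum_abs _ _).trans ?_
    calc _ ≤ ∑ _ ∈ Finset.range R, (1 : ℝ) := Finset.sum_le_sum fun s hs => ?_
      _ = R := by simp
    have hsR : s < R := Finset.mem_range.1 hs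
    have hpos : (0 : ℝ) < R - s := sub_pos.2 (by exact_mod_cast hsR)
    have hlip := abs_dirichletKernel_add_sub_le (M + s) (R - s) x
    rw [add_assoc, Nat.add_sub_cancel' hsR.le, Nat.cast_sub hsR.le] at hlip
    rwa [← div_eq_mul_inv, ← sub_div, abs_div, abs_of_pos hpos, div_le_one hpos]
  have hnonneg : (0 : ℝ) ≤ harmonic R := by exact_mod_cast harmonic_mono R.zero_le
  have htri := abs_sub_abs_le_abs_sub (dirichletKernel (M + R) x * harmonic R)
    (∑ s ∈ Finset.range R, dirichletKernel (M + s) x / ((R : ℝ) - s))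
  rw [abs_mul, abs_of_nonneg hnonneg] at htri
  linarith

theorem le_abs_sum_dirichletKernel_div (hx : 2 ^ m * x ∈ Set.Ico (1 / 2) 1) (Q : ℕ) {R : ℕ}
    (hR₀ : 0 < R) (hR : R ≤ 2 ^ (m + 1)) :
    tent (2 ^ m) R * harmonic R - R - ((2 ^ m) ^ 2 / R + 2 ^ m / 2 * harmonic Q) ≤
      |∑ i ∈ Finset.Ico 1 (2 ^ (m + 1) * Q + R),
        dirichletKernel (2 ^ (m + 1) * Q + R - i) x / i| := by
  have hhead := abs_sum_dirichletKernel_periods_le hx Q (Nat.cast_pos.2 hR₀)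
  have htail := le_abs_sum_dirichletKernel_tail (2 ^ (m + 1) * Q) R x
  rw [abs_dirichletKernel_eq_tent hx Q hR] at htail
  rw [sum_Ico_dirichletKernel_div_eq, Finset.sum_range_add]
  push_cast
  simp only [add_sub_add_left_eq_sub]
  set head := ∑ j ∈ Finset.range (2 ^ (m + 1) * Q),
    dirichletKernel j x / (2 ^ (m + 1) * Q + (R : ℝ) - j)
  set tail := ∑ s ∈ Finset.range R, dirichletKernel (2 ^ (m + 1) * Q + s) x / ((R : ℝ) - s)
  have htri := abs_sub_abs_le_abs_sub tail (-head)
  rw [abs_neg, sub_neg_eq_add, add_comm tail] at htri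
  linarith

end NorlundSum

section AlternatingDigits

lemma three_mul_pIdx_add_one (n : ℕ) : 3 * pIdx n + 1 = 4 ^ (n + 1) := by
  unfold pIdx
  induction n with
  | zero => simp
  | succ n ih => rw [Finset.sum_range_succ, pow_succ 4 (n + 1)]; omega

lemma exists_pIdx_eq_four_pow_mul_add {k n : ℕ} (h : k ≤ n) :
    ∃ Q, pIdx n = 4 ^ (k + 1) * Q + pIdx k := by
  refine ⟨∑ j ∈ Finset.range (n - k), 4 ^ j, ?_⟩
  rw [pIdx, show n + 1 = (k + 1) + (n - k) by omega, Finset.sum_range_add, Finset.mul_sum, add_comm,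
    pIdx]
  simp only [pow_add]

lemma exists_pIdx_eq_two_pow_mul_add {m n : ℕ} (h : m ≤ 2 * n) :
    ∃ Q, pIdx n = 2 ^ (m + 1) * Q + pIdx (m / 2) := by
  obtain ⟨Q, hQ⟩ := exists_pIdx_eq_four_pow_mul_add (show m / 2 ≤ n by omega)
  obtain ⟨c, hc⟩ : 2 ^ (m + 1) ∣ 4 ^ (m / 2 + 1) := by
    rw [show 4 = 2 ^ 2 by norm_num, ← pow_mul]
    exact pow_dvd_pow 2 (by omega)
  exact ⟨c * Q, by rw [hQ, hc, mul_assoc]⟩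

lemma three_mul_pIdx_half_add_one (m : ℕ) :
    3 * pIdx (m / 2) + 1 = 2 * 2 ^ m ∨ 3 * pIdx (m / 2) + 1 = 4 * 2 ^ m := by
  rw [three_mul_pIdx_add_one, show 4 = 2 ^ 2 by norm_num, ← pow_mul]
  rcases Nat.even_or_odd' m with ⟨k, rfl | rfl⟩
  · right
    rw [← pow_add]
    congr 1
    omega
  · left
    rw [← pow_succ']
    congr 1
    omega

lemma two_pow_le_two_mul_pIdx_half (m : ℕ) : 2 ^ m ≤ 2 * pIdx (m / 2) := by
  have hpow : 0 < 2 ^ m := Nat.two_pow_pos m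
  have hR := three_mul_pIdx_half_add_one m
  omega

lemma three_mul_pIdx_half_le (m : ℕ) : 3 * pIdx (m / 2) ≤ 4 * 2 ^ m := by
  have hR := three_mul_pIdx_half_add_one m
  omega

lemma tent_pIdx_half_ge (m : ℕ) : (2 * 2 ^ m - 1) / 3 ≤ tent (2 ^ m) (pIdx (m / 2)) := by
  rcases three_mul_pIdx_half_add_one m with h | h <;> rify at h <;>
    exact le_min (by linarith [one_le_pow₀ (M₀ := ℝ) one_le_two (n := m)]) (by linarith)

lemma pIdx_le_two_pow (n : ℕ) : pIdx n ≤ 2 ^ (2 * n + 1) := by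
  have h := three_mul_pIdx_add_one n
  rw [pow_succ, show 4 = 2 ^ 2 by norm_num, ← pow_mul] at h
  rw [pow_succ]
  omega

lemma le_two_pow_of_two_pow_mul_le_pIdx {m n Q : ℕ} (hnm : n ≤ m)
    (hQ : 2 ^ (m + 1) * Q ≤ pIdx n) : Q ≤ 2 ^ m := by
  refine Nat.le_of_mul_le_mul_left ?_ (Nat.two_pow_pos (m + 1))
  calc 2 ^ (m + 1) * Q ≤ 2 ^ (2 * n + 1) := hQ.trans (pIdx_le_two_pow n)
    _ ≤ 2 ^ (m + 1 + m) := Nat.pow_le_pow_right two_pos (by omega)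
    _ = 2 ^ (m + 1) * 2 ^ m := pow_add ..

lemma logSum_pIdx_le (n : ℕ) : logSum (pIdx n) ≤ 2 * n + 2 := by
  have hmono : (harmonic (pIdx n - 1) : ℝ) ≤ harmonic (2 ^ (2 * n + 1)) := by
    exact_mod_cast harmonic_mono ((Nat.sub_le _ 1).trans (pIdx_le_two_pow n))
  have hlog : Real.log (2 ^ (2 * n + 1) : ℕ) ≤ 2 * n + 1 := by
    push_cast
    rw [Real.log_pow]
    push_cast
    exact mul_le_of_le_one_right (by positivity) (by linarith [Real.log_two_lt_d9])
  rw [logSum_eq_harmonic]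
  linarith [harmonic_le_one_add_log (2 ^ (2 * n + 1))]

lemma le_logSum_pIdx_sub_one (n : ℕ) : (n : ℝ) ≤ logSum (pIdx n - 1) := by
  rcases n.eq_zero_or_pos with rfl | hn
  · simp [pIdx, logSum]
  have hle : 4 ^ n ≤ pIdx n - 1 - 1 + 1 := by
    have hp := three_mul_pIdx_add_one n
    have h4 : 4 ^ 1 ≤ 4 ^ n := Nat.pow_le_pow_right (by norm_num) hn
    rw [pow_succ] at hp
    omega
  have hlog4 : 1 ≤ Real.log 4 := by
    rw [show (4 : ℝ) = 2 ^ 2 by norm_num, Real.log_pow]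
    push_cast
    linarith [Real.log_two_gt_d9]
  calc (n : ℝ) ≤ n * Real.log 4 := le_mul_of_one_le_right n.cast_nonneg hlog4
    _ = Real.log (4 ^ n : ℕ) := by rw [Nat.cast_pow, Real.log_pow, Nat.cast_ofNat]
    _ ≤ Real.log (pIdx n - 1 - 1 + 1 : ℕ) := by gcongr
    _ ≤ logSum (pIdx n - 1) := by
        rw [logSum_eq_harmonic]
        exact log_add_one_le_harmonic _

lemma logSum_pIdx_pos {n : ℕ} (hn : 0 < n) : 0 < logSum (pIdx n) :=
  (Nat.cast_pos.2 hn).trans_le ((le_logSum_pIdx_sub_one n).trans (logSum_mono (Nat.sub_le _ 1)))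

end AlternatingDigits

section LowerBound

variable {m n : ℕ} {x : ℝ}

lemma harmonic_two_pow_le (m : ℕ) : (harmonic (2 ^ m) : ℝ) ≤ 1 + m * Real.log 2 := by
  have h := harmonic_le_one_add_log (2 ^ m)
  rwa [Nat.cast_pow, Nat.cast_ofNat, Real.log_pow] at h

lemma le_harmonic_of_two_pow_le {R : ℕ} (hR : 2 ^ m ≤ 2 * R) :
    (m - 1) * Real.log 2 ≤ harmonic R := by
  have hR' : (2 : ℝ) ^ m / 2 ≤ (R + 1 : ℕ) := by
    rify at hR
    push_cast
    linarith
  calc (m - 1) * Real.log 2 = Real.log (2 ^ m / 2) := by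
        rw [Real.log_div (by positivity) two_ne_zero, Real.log_pow]
        ring
    _ ≤ Real.log (R + 1 : ℕ) := Real.log_le_log (by positivity) hR'
    _ ≤ harmonic R := log_add_one_le_harmonic R

-- Applied with `a = 2 ^ m` and `L = log 2`: the leading terms on the right differ by
-- `(2 / 3 - 1 / 2) * a * m * L`, and `m ≥ 100` absorbs the terms of order `a`.
lemma tail_sub_head_ge {a m L : ℝ} (hm : 100 ≤ m) (ham : m + 1 ≤ a) (hL₁ : 0.69 ≤ L)
    (hL₂ : L ≤ 1) :
    a * m / 20 ≤ (2 * a - 1) / 3 * ((m - 1) * L) - 4 / 3 * a - (2 * a + a / 2 * (1 + m * L)) := by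
  have ha : 0 ≤ a := by linarith
  have hmL : (m - 1) * L ≤ a := by nlinarith
  have haL : a * L ≤ a := mul_le_of_le_one_right ha hL₂
  have hamL : a * m * 0.69 ≤ a * m * L := by gcongr
  have ham₀ : a * 100 ≤ a * m := by gcongr
  linarith

lemma le_tent_pIdx_half_mul_harmonic (hm : 1 ≤ m) :
    (2 * 2 ^ m - 1) / 3 * ((m - 1) * Real.log 2) ≤
      tent (2 ^ m) (pIdx (m / 2)) * harmonic (pIdx (m / 2)) := by
  have hT := tent_pIdx_half_ge m
  have hm' : (1 : ℝ) ≤ m := by exact_mod_cast hm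
  have hpow : (1 : ℝ) ≤ 2 ^ m := one_le_pow₀ one_le_two
  exact mul_le_mul hT (le_harmonic_of_two_pow_le (two_pow_le_two_mul_pIdx_half m))
    (mul_nonneg (by linarith) (Real.log_nonneg one_le_two)) (by linarith)

lemma le_abs_sum_dirichletKernel_pIdx (hm : 100 ≤ m) (hnm : n ≤ m) (hmn : m ≤ 2 * n)
    (hx : 2 ^ m * x ∈ Set.Ico (1 / 2) 1) :
    2 ^ m * (m : ℝ) / 20 ≤ |∑ i ∈ Finset.Ico 1 (pIdx n), dirichletKernel (pIdx n - i) x / i| := by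
  obtain ⟨Q, hQ⟩ := exists_pIdx_eq_two_pow_mul_add hmn
  have hpow : 0 < 2 ^ m := Nat.two_pow_pos m
  have htail := le_tent_pIdx_half_mul_harmonic (m := m) (by omega)
  have hR₁ := two_pow_le_two_mul_pIdx_half m
  have hR₂ := three_mul_pIdx_half_le m
  set R := pIdx (m / 2)
  have hHQ : (harmonic Q : ℝ) ≤ 1 + m * Real.log 2 :=
    (Rat.cast_le.2 (harmonic_mono (le_two_pow_of_two_pow_mul_le_pIdx hnm (by omega)))).trans
      (harmonic_two_pow_le m)
  have hhead : (2 : ℝ) ^ m / 2 * harmonic Q ≤ 2 ^ m / 2 * (1 + m * Real.log 2) := by gcongr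
  have hbound := le_abs_sum_dirichletKernel_div hx Q (R := R) (by omega) (by rw [pow_succ]; omega)
  rw [← hQ] at hbound
  have hgap := tail_sub_head_ge (a := 2 ^ m) (m := m) (L := Real.log 2) (by exact_mod_cast hm)
    (by exact_mod_cast (Nat.lt_two_pow_self : m < 2 ^ m)) (by linarith [Real.log_two_gt_d9])
    (by linarith [Real.log_two_lt_d9])
  rify at hR₁ hR₂ hpow
  have hdiv : ((2 : ℝ) ^ m) ^ 2 / R ≤ 2 * 2 ^ m := by
    rw [div_le_iff₀ (by linarith)]
    nlinarith
  linarith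

lemma le_abs_FKernel_pIdx (hm : 100 ≤ m) (hnm : n ≤ m) (hmn : m ≤ 2 * n)
    (hx : 2 ^ m * x ∈ Set.Ico (1 / 2) 1) : 1 / 100 / x ≤ |FKernel (pIdx n) x| := by
  have hlog_pos : 0 < logSum (pIdx n) := logSum_pIdx_pos (by omega)
  have hinv : 1 / 100 / x ≤ 2 ^ m / 50 := by
    rw [div_le_iff₀ (pos_of_two_pow_mul_mem_Ico hx)]
    linarith [hx.1]
  have hlog : logSum (pIdx n) ≤ 5 / 2 * m := by
    rify at hnm hm
    linarith [logSum_pIdx_le n]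
  rw [FKernel, abs_mul, abs_of_pos (one_div_pos.2 hlog_pos), one_div_mul_eq_div,
    le_div_iff₀ hlog_pos]
  calc 1 / 100 / x * logSum (pIdx n) ≤ 2 ^ m / 50 * (5 / 2 * m) := by gcongr
    _ = 2 ^ m * (m : ℝ) / 20 := by ring
    _ ≤ _ := le_abs_sum_dirichletKernel_pIdx hm hnm hmn hx

lemma exists_two_pow_mul_mem_Ico {N : ℕ}
    (hx : x ∈ Set.Ico ((2 : ℝ) ^ (-(N : ℤ) - 1)) (2 ^ (-(n : ℤ)))) :
    ∃ m, n ≤ m ∧ m ≤ N ∧ 2 ^ m * x ∈ Set.Ico (1 / 2) 1 := by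
  have hx₀ : 0 < x := lt_of_lt_of_le (by positivity) hx.1
  obtain ⟨k, hk₁, hk₂⟩ := exists_mem_Ico_zpow hx₀ one_lt_two
  have hkn : k < -n := (zpow_lt_zpow_iff_right₀ one_lt_two).1 (hk₁.trans_lt hx.2)
  have hkN : -(N : ℤ) - 1 < k + 1 := (zpow_lt_zpow_iff_right₀ one_lt_two).1 (hx.1.trans_lt hk₂)
  obtain ⟨m, hm⟩ : ∃ m : ℕ, k = -m - 1 := ⟨(-k - 1).toNat, by omega⟩
  subst hm
  have hpow : (0 : ℝ) < 2 ^ m := by positivity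
  rw [zpow_sub_one₀ two_ne_zero, zpow_neg, zpow_natCast] at hk₁
  rw [sub_add_cancel, zpow_neg, zpow_natCast] at hk₂
  refine ⟨m, by omega, by omega, ?_, ?_⟩
  · calc (1 / 2 : ℝ) = 2 ^ m * ((2 ^ m)⁻¹ * 2⁻¹) := by field_simp
      _ ≤ 2 ^ m * x := by gcongr
  · calc 2 ^ m * x < 2 ^ m * (2 ^ m)⁻¹ := by gcongr
      _ = 1 := mul_inv_cancel₀ hpow.ne'

end LowerBound

section Omega

lemma Omega_subset_Ico (n : ℕ) :
    Omega n ⊆ Set.Ico ((2 : ℝ) ^ (-((2 * n : ℕ) : ℤ) - 1)) (2 ^ (-(n : ℤ))) := by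
  refine Set.iUnion₂_subset fun m hm => Set.Ico_subset_Ico ?_ ?_
  · refine le_add_of_le_of_nonneg (zpow_le_zpow_right₀ one_le_two ?_) (by positivity)
    have := (Finset.mem_Icc.1 hm).2
    omega
  · exact zpow_le_zpow_right₀ one_le_two (by simpa using (Finset.mem_Icc.1 hm).1)

lemma one_lt_mTilde_m₀ : 1 < mTilde m₀ := by
  obtain ⟨k, hk⟩ := exists_nat_ge (16 * (2 ^ 15 + 2) : ℝ)
  refine Nat.sInf_mem (s := {m | 1 < mTilde m}) ⟨2 * k, ?_⟩
  have hlog := le_logSum_pIdx_sub_one k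
  rw [Set.mem_ofPred_eq, ← Int.add_one_le_iff, mTilde, Int.le_floor,
    Nat.mul_div_cancel_left _ two_pos]
  push_cast
  linarith

lemma hundred_le_m₀ : 100 ≤ m₀ := by
  have hfloor := one_lt_mTilde_m₀
  rw [← Int.add_one_le_iff, mTilde, Int.le_floor] at hfloor
  have hlog := (logSum_mono (Nat.sub_le (pIdx (m₀ / 2)) 1)).trans (logSum_pIdx_le (m₀ / 2))
  have hhalf : ((m₀ / 2 : ℕ) : ℝ) ≤ m₀ / 2 := Nat.cast_div_le
  push_cast at hfloor
  suffices (100 : ℝ) ≤ m₀ by exact_mod_cast this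
  linarith

end Omega

theorem stmt11_general : ∃ c > (0 : ℝ), ∀ n : ℕ, 100 ≤ n →
    ∀ x ∈ Set.Ico ((2 : ℝ) ^ (-((2 * n : ℕ) : ℤ) - 1)) (2 ^ (-(n : ℤ))),
      c / x ≤ |FKernel (pIdx n) x| := by
  refine ⟨1 / 100, by norm_num, fun n hn x hx => ?_⟩
  obtain ⟨m, hnm, hmn, hmx⟩ := exists_two_pow_mul_mem_Ico hx
  exact le_abs_FKernel_pIdx (hn.trans hnm) hnm hmn hmx

/-- Lemma (GG). There is an absolute constant `c > 0` such that
`|F_{p_n}(x)| ≥ c/x` for every `n ≥ m₀` and `x ∈ Ω_n`. -/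
theorem stmt11 : ∃ c > (0:ℝ), ∀ n : ℕ, m₀ ≤ n → ∀ x ∈ Omega n,
    c / x ≤ |FKernel (pIdx n) x| := by
  obtain ⟨c, hc, hbound⟩ := stmt11_general
  exact ⟨c, hc, fun n hn x hx => hbound n (hundred_le_m₀.trans hn) x (Omega_subset_Ico n hx)⟩

end
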